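/- If the tensor of the commutative quantale V coincides with binary meet (so V is a frame and I = ⊤), then the generalised power construction P satisfies the Beck-Chevalley Condition: for every exact lax square (p0: P → A, p1: P → B, f: A → C, g: B → C) of V-categories and all V-subsets φ of A and ψ of B, the equality P C(P f φ, P g ψ) = ⋁_θ P A(φ, P p0 θ) ∧ P B(P p1 θ, ψ) holds, where θ ranges over all V-subsets of P. -/

import Mathlib

universe u v w

/-- A category enriched in a commutative quantale `V`:
objects together with `V`-valued homs satisfying the identity and composition axioms. -/
structure VCategory (V : Type u) [CompleteLattice V] [CommMonoid V] where
  Obj : Type v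
  hom : Obj → Obj → V
  one_le_hom : ∀ a, (1 : V) ≤ hom a a
  comp_le : ∀ a b c, hom b c * hom a b ≤ hom a c

/-- A `V`-functor is an object assignment which is (hom-)expanding. -/
def IsVFunctor {V : Type u} [CompleteLattice V] [CommMonoid V]
    (A : VCategory.{u, v} V) (B : VCategory.{u, w} V) (f : A.Obj → B.Obj) : Prop :=
  ∀ a a', A.hom a a' ≤ B.hom (f a) (f a')

/-- A module `R : A ⇸ B`. -/
def IsModule {V : Type u} [CompleteLattice V] [CommMonoid V]
    (A : VCategory.{u, v} V) (B : VCategory.{u, w} V) (R : B.Obj → A.Obj → V) : Prop :=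
  ∀ (a a' : A.Obj) (b b' : B.Obj), B.hom b' b * R b a * A.hom a a' ≤ R b' a'

/-- The internal hom of the quantale: `[x,y] = ⋁ {z | x ⊗ z ≤ y}`. -/
def ihom {V : Type u} [CompleteLattice V] [CommMonoid V] (x y : V) : V :=
  sSup {z | x * z ≤ y}

/-- A presheaf on `A`. -/
def IsPresheaf {V : Type u} [CompleteLattice V] [CommMonoid V]
    (A : VCategory.{u, v} V) (F : A.Obj → V) : Prop :=
  ∀ a a', F a * A.hom a' a ≤ F a'

/-- The Egli-Milner `V`-valued hom on `V`-subsets of a `V`-category `A`. -/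
def PHom {V : Type u} [CompleteLattice V] [CommMonoid V]
    (A : VCategory.{u, v} V) (φ ψ : A.Obj → V) : V :=
  (⨅ a, ihom (φ a) (⨆ a', ψ a' * A.hom a a')) *
    (⨅ a', ihom (ψ a') (⨆ a, φ a * A.hom a a'))

/-- Direct image of a `V`-subset along a map. -/
def Pmap {V : Type u} [CompleteLattice V] [CommMonoid V] {α : Type v} {β : Type w}
    (f : α → β) (φ : α → V) : β → V :=
  fun b => ⨆ a, ⨆ _ : f a = b, φ a

/-!
On `V`-categories, the hom of the power construction is the Egli-Milner lifting of the hom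
`V`-relation, and direct images in its arguments amount to restricting that relation along the
underlying maps. Exactness says that `C(f -, g -)` is the composite of `A(-, p0 -)` and
`B(p1 -, -)`, so the Beck-Chevalley condition reduces to the functoriality of the Egli-Milner
lifting. Its lax half holds in every commutative quantale. For the other half, when the tensor is
the meet, the lifting of a composite of `R` and `S` at `φ`, `ψ` factors through the meet of the
image of `φ` under `R` with the preimage of `ψ` under `S`: everything in this `V`-subset comes from
`φ` and leads to `ψ`, and idempotency allows `φ` to be used twice, once to reach the interpolating
element and once to show that it belongs to the image.
-/

section Quantale

open Quantale

variable {V : Type*} [CompleteLattice V] [CommMonoid V]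

theorem isQuantale_of_mul_sSup (h : ∀ (x : V) (s : Set V), x * sSup s = ⨆ y ∈ s, x * y) :
    IsQuantale V where
  mul_sSup_distrib := h
  sSup_mul_distrib s y := by simp only [mul_comm _ y, h]

/-- The image of the `V`-subset `φ` under the `V`-relation `R`. The preimage of `ψ` is
`relImage (flip R) ψ`. -/
def relImage {α β : Type*} (R : α → β → V) (φ : α → V) (b : β) : V :=
  ⨆ a, φ a * R a b

/-- The composite of two `V`-relations, in diagrammatic order. -/
def relComp {α β γ : Type*} (R : α → β → V) (S : β → γ → V) (a : α) (c : γ) : V :=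
  ⨆ b, R a b * S b c

/-- The lower (Hoare) lifting of a `V`-relation to `V`-subsets: the degree to which every element
of `φ` is `R`-related to some element of `ψ`. -/
def hoareLift {α β : Type*} (R : α → β → V) (φ : α → V) (ψ : β → V) : V :=
  ⨅ a, ihom (φ a) (relImage (flip R) ψ a)

/-- The Egli-Milner lifting of a `V`-relation to `V`-subsets. For `R = A.hom` it is `PHom A`. -/
def egliMilner {α β : Type*} (R : α → β → V) (φ : α → V) (ψ : β → V) : V :=
  hoareLift R φ ψ * hoareLift (flip R) ψ φ

/-- The part of the image of `φ` under `R` lying in the preimage of `ψ` under `S`: the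
interpolating `V`-subset through which the lifting of a composite factors. -/
def interpolant {α β γ : Type*} (R : α → β → V) (S : β → γ → V) (φ : α → V) (ψ : γ → V) (b : β) :
    V :=
  relImage R φ b * relImage (flip S) ψ b

variable {α β γ : Type*}

theorem PHom_eq_egliMilner (A : VCategory V) (φ ψ : A.Obj → V) :
    PHom A φ ψ = egliMilner A.hom φ ψ :=
  rfl

theorem egliMilner_flip (R : α → β → V) (φ : α → V) (ψ : β → V) :
    egliMilner (flip R) ψ φ = egliMilner R φ ψ :=
  mul_comm _ _

theorem flip_relComp (R : α → β → V) (S : β → γ → V) :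
    flip (relComp R S) = relComp (flip S) (flip R) := by
  funext c a
  simp only [flip, relComp, mul_comm]

theorem interpolant_flip (R : α → β → V) (S : β → γ → V) (φ : α → V) (ψ : γ → V) :
    interpolant (flip S) (flip R) ψ φ = interpolant R S φ ψ :=
  funext fun _ => mul_comm _ _

theorem mul_le_relImage (R : α → β → V) (φ : α → V) (a : α) (b : β) :
    φ a * R a b ≤ relImage R φ b :=
  le_iSup (fun a => φ a * R a b) a

theorem Pmap_le_iff {f : α → β} {φ : α → V} {χ : β → V} :
    (∀ b, Pmap f φ b ≤ χ b) ↔ ∀ a, φ a ≤ χ (f a) := by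
  simp only [Pmap, iSup_le_iff]
  exact ⟨fun h a => h (f a) a rfl, fun h b a hab => hab ▸ h a⟩

variable [IsQuantale V]

theorem le_ihom_iff {x y z : V} : x ≤ ihom y z ↔ y * x ≤ z :=
  rightMulResiduation_le_iff_mul_le

theorem Pmap_mul_le_iff {f : α → β} {φ : α → V} {k χ : β → V} :
    (∀ b, Pmap f φ b * k b ≤ χ b) ↔ ∀ a, φ a * k (f a) ≤ χ (f a) := by
  simp only [mul_comm _ (k _), ← le_ihom_iff]
  exact Pmap_le_iff (χ := fun b => ihom (k b) (χ b))

theorem relImage_mono {φ φ' : α → V} (h : ∀ a, φ a ≤ φ' a) (R : α → β → V) (b : β) :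
    relImage R φ b ≤ relImage R φ' b :=
  iSup_mono fun a => mul_le_mul_left (h a) (R a b)

theorem relImage_mul_const (R : α → β → V) (φ : α → V) (x : V) (b : β) :
    relImage R (fun a => φ a * x) b = relImage R φ b * x := by
  simp only [relImage, iSup_mul_distrib, mul_right_comm]

theorem relImage_relComp (R : α → β → V) (S : β → γ → V) (φ : α → V) :
    relImage (relComp R S) φ = relImage S (relImage R φ) := by
  funext c
  simp only [relImage, relComp, mul_iSup_distrib, iSup_mul_distrib, mul_assoc]
  exact iSup_comm

theorem relImage_Pmap (R : β → γ → V) (f : α → β) (φ : α → V) :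
    relImage R (Pmap f φ) = relImage (fun a c => R (f a) c) φ := by
  funext c
  refine eq_of_forall_ge_iff fun z => ?_
  simp only [relImage, iSup_le_iff]
  exact Pmap_mul_le_iff (k := fun b => R b c) (χ := fun _ => z)

theorem le_hoareLift_iff {R : α → β → V} {φ : α → V} {ψ : β → V} {x : V} :
    x ≤ hoareLift R φ ψ ↔ ∀ a, φ a * x ≤ relImage (flip R) ψ a := by
  simp only [hoareLift, le_iInf_iff, le_ihom_iff]

theorem hoareLift_Pmap_left (R : β → γ → V) (f : α → β) (φ : α → V) (ψ : γ → V) :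
    hoareLift R (Pmap f φ) ψ = hoareLift (fun a c => R (f a) c) φ ψ := by
  refine eq_of_forall_le_iff fun x => ?_
  simp only [le_hoareLift_iff]
  exact Pmap_mul_le_iff (k := fun _ => x)

theorem hoareLift_Pmap_right (R : α → γ → V) (g : β → γ) (φ : α → V) (ψ : β → V) :
    hoareLift R φ (Pmap g ψ) = hoareLift (fun a b => R a (g b)) φ ψ := by
  simp only [hoareLift, relImage_Pmap]
  rfl

theorem egliMilner_Pmap_left (R : β → γ → V) (f : α → β) (φ : α → V) (ψ : γ → V) :
    egliMilner R (Pmap f φ) ψ = egliMilner (fun a c => R (f a) c) φ ψ :=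
  congrArg₂ (· * ·) (hoareLift_Pmap_left R f φ ψ) (hoareLift_Pmap_right (flip R) f ψ φ)

theorem egliMilner_Pmap_right (R : α → γ → V) (g : β → γ) (φ : α → V) (ψ : β → V) :
    egliMilner R φ (Pmap g ψ) = egliMilner (fun a b => R a (g b)) φ ψ :=
  congrArg₂ (· * ·) (hoareLift_Pmap_right R g φ ψ) (hoareLift_Pmap_left (flip R) g ψ φ)

theorem hoareLift_mul_hoareLift_le (R : α → β → V) (S : β → γ → V) (φ : α → V) (θ : β → V)
    (ψ : γ → V) :
    hoareLift R φ θ * hoareLift S θ ψ ≤ hoareLift (relComp R S) φ ψ := by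
  refine le_hoareLift_iff.2 fun a => ?_
  calc φ a * (hoareLift R φ θ * hoareLift S θ ψ)
      = φ a * hoareLift R φ θ * hoareLift S θ ψ := (mul_assoc _ _ _).symm
    _ ≤ relImage (flip R) θ a * hoareLift S θ ψ :=
        mul_le_mul_left (le_hoareLift_iff.1 le_rfl a) _
    _ = relImage (flip R) (fun b => θ b * hoareLift S θ ψ) a :=
        (relImage_mul_const _ _ _ _).symm
    _ ≤ relImage (flip R) (relImage (flip S) ψ) a :=
        relImage_mono (le_hoareLift_iff.1 le_rfl) _ _
    _ = relImage (flip (relComp R S)) ψ a := by rw [flip_relComp, relImage_relComp]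

theorem egliMilner_mul_egliMilner_le (R : α → β → V) (S : β → γ → V) (φ : α → V) (θ : β → V)
    (ψ : γ → V) :
    egliMilner R φ θ * egliMilner S θ ψ ≤ egliMilner (relComp R S) φ ψ := by
  calc egliMilner R φ θ * egliMilner S θ ψ
      = (hoareLift R φ θ * hoareLift S θ ψ) *
          (hoareLift (flip S) ψ θ * hoareLift (flip R) θ φ) := by
        rw [egliMilner, egliMilner, mul_mul_mul_comm, mul_comm (hoareLift (flip R) θ φ)]
    _ ≤ hoareLift (relComp R S) φ ψ * hoareLift (relComp (flip S) (flip R)) ψ φ :=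
        mul_le_mul' (hoareLift_mul_hoareLift_le R S φ θ ψ)
          (hoareLift_mul_hoareLift_le (flip S) (flip R) ψ θ φ)
    _ = egliMilner (relComp R S) φ ψ := by rw [← flip_relComp, egliMilner]

theorem mul_relImage_flip_le (hidem : ∀ x : V, x * x = x) (R : α → β → V) (φ : α → V)
    (χ : β → V) (a : α) :
    φ a * relImage (flip R) χ a ≤ relImage (flip R) (fun b => relImage R φ b * χ b) a := by
  rw [relImage, mul_iSup_distrib]
  refine iSup_mono fun b => ?_
  calc φ a * (χ b * R a b)
      = φ a * R a b * χ b * R a b := by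
        rw [mul_right_comm (φ a), mul_assoc (φ a * χ b), hidem, mul_assoc]
    _ ≤ relImage R φ b * χ b * R a b :=
        mul_le_mul_left (mul_le_mul_left (mul_le_relImage R φ a b) _) _

theorem hoareLift_relComp_le_hoareLift_interpolant (hidem : ∀ x : V, x * x = x)
    (R : α → β → V) (S : β → γ → V) (φ : α → V) (ψ : γ → V) :
    hoareLift (relComp R S) φ ψ ≤ hoareLift R φ (interpolant R S φ ψ) := by
  refine le_hoareLift_iff.2 fun a => ?_
  calc φ a * hoareLift (relComp R S) φ ψ
      = φ a * (φ a * hoareLift (relComp R S) φ ψ) := by rw [← mul_assoc, hidem]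
    _ ≤ φ a * relImage (flip (relComp R S)) ψ a :=
        mul_le_mul_right (le_hoareLift_iff.1 le_rfl a) _
    _ = φ a * relImage (flip R) (relImage (flip S) ψ) a := by
        rw [flip_relComp, relImage_relComp]
    _ ≤ relImage (flip R) (interpolant R S φ ψ) a := mul_relImage_flip_le hidem R φ _ a

theorem hoareLift_flip_interpolant (hle : ∀ x y : V, x * y ≤ x) (R : α → β → V)
    (S : β → γ → V) (φ : α → V) (ψ : γ → V) :
    hoareLift (flip R) (interpolant R S φ ψ) φ = ⊤ :=
  top_le_iff.1 <| le_hoareLift_iff.2 fun _ => (hle _ _).trans (hle _ _)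

theorem egliMilner_relComp_le_left (hmeet : ∀ x y : V, x * y = x ⊓ y) (R : α → β → V)
    (S : β → γ → V) (φ : α → V) (ψ : γ → V) :
    egliMilner (relComp R S) φ ψ ≤ egliMilner R φ (interpolant R S φ ψ) := by
  have hidem (x : V) : x * x = x := by rw [hmeet, inf_idem]
  have hle (x y : V) : x * y ≤ x := (hmeet x y).trans_le inf_le_left
  calc egliMilner (relComp R S) φ ψ
      ≤ hoareLift (relComp R S) φ ψ := hle _ _
    _ ≤ hoareLift R φ (interpolant R S φ ψ) :=
        hoareLift_relComp_le_hoareLift_interpolant hidem R S φ ψ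
    _ = egliMilner R φ (interpolant R S φ ψ) := by
        rw [egliMilner, hoareLift_flip_interpolant hle, hmeet, inf_top_eq]

theorem egliMilner_relComp_le_right (hmeet : ∀ x y : V, x * y = x ⊓ y) (R : α → β → V)
    (S : β → γ → V) (φ : α → V) (ψ : γ → V) :
    egliMilner (relComp R S) φ ψ ≤ egliMilner S (interpolant R S φ ψ) ψ := by
  rw [← egliMilner_flip, flip_relComp, ← egliMilner_flip S, ← interpolant_flip]
  exact egliMilner_relComp_le_left hmeet (flip S) (flip R) ψ φ

theorem egliMilner_relComp (hmeet : ∀ x y : V, x * y = x ⊓ y) (R : α → β → V)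
    (S : β → γ → V) (φ : α → V) (ψ : γ → V) :
    egliMilner (relComp R S) φ ψ = ⨆ θ, egliMilner R φ θ ⊓ egliMilner S θ ψ := by
  refine le_antisymm (le_iSup_of_le (interpolant R S φ ψ) (le_inf ?_ ?_)) (iSup_le fun θ => ?_)
  · exact egliMilner_relComp_le_left hmeet R S φ ψ
  · exact egliMilner_relComp_le_right hmeet R S φ ψ
  · rw [← hmeet]
    exact egliMilner_mul_egliMilner_le R S φ θ ψ

theorem power_BCC_general (hmeet : ∀ x y : V, x * y = x ⊓ y) {W : Type*} (A B C : VCategory V)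
    (p0 : W → A.Obj) (p1 : W → B.Obj) (f : A.Obj → C.Obj) (g : B.Obj → C.Obj)
    (hexact : ∀ a b, C.hom (f a) (g b) = ⨆ w, A.hom a (p0 w) * B.hom (p1 w) b)
    (φ : A.Obj → V) (ψ : B.Obj → V) :
    PHom C (Pmap f φ) (Pmap g ψ) =
      ⨆ θ : W → V, PHom A φ (Pmap p0 θ) ⊓ PHom B (Pmap p1 θ) ψ := by
  have hcomp : (fun a b => C.hom (f a) (g b)) =
      relComp (fun a w => A.hom a (p0 w)) (fun w b => B.hom (p1 w) b) :=
    funext₂ hexact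
  simp only [PHom_eq_egliMilner, egliMilner_Pmap_left, egliMilner_Pmap_right]
  rw [hcomp, egliMilner_relComp hmeet]

end Quantale

/-- If the tensor of `V` is binary meet, the generalised power construction satisfies
the Beck-Chevalley Condition. -/
theorem power_BCC {V : Type u} [CompleteLattice V] [CommMonoid V]
    (hV : ∀ (x : V) (s : Set V), x * sSup s = ⨆ y ∈ s, x * y)
    (hmeet : ∀ x y : V, x * y = x ⊓ y)
    (P A B C : VCategory.{u, v} V)
    (p0 : P.Obj → A.Obj) (p1 : P.Obj → B.Obj) (f : A.Obj → C.Obj) (g : B.Obj → C.Obj)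
    (hp0 : IsVFunctor P A p0) (hp1 : IsVFunctor P B p1)
    (hf : IsVFunctor A C f) (hg : IsVFunctor B C g)
    (hlax : ∀ w : P.Obj, (1 : V) ≤ C.hom (f (p0 w)) (g (p1 w)))
    (hexact : ∀ (a : A.Obj) (b : B.Obj),
      C.hom (f a) (g b) = ⨆ w, A.hom a (p0 w) * B.hom (p1 w) b) :
    ∀ (φ : A.Obj → V) (ψ : B.Obj → V),
      PHom C (Pmap f φ) (Pmap g ψ) =
        ⨆ θ : P.Obj → V, PHom A φ (Pmap p0 θ) ⊓ PHom B (Pmap p1 θ) ψ := by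
  have : IsQuantale V := isQuantale_of_mul_sSup hV
  exact power_BCC_general hmeet A B C p0 p1 f g hexact
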